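/- For any fixed α ∈ (0,1) and p ∈ (0,1): (i) F_n(α) = log_{1/√(pq)} n + O_p(√(ln n)), i.e., for every ε > 0 there is A > 0 such that P(|F_n(α) − log_{1/√(pq)} n| > A√(ln n)) < ε for all large n; in particular (ii) F_n(α) / log_{1/√(pq)} n → 1 in probability as n → ∞. -/

import Mathlib

/-!
Partial fillup in tries (Janson–Szpankowski), Theorem 1 (two-point concentration
of the α-fillup level `F_n(α)`).

Model: an outcome `ω : ℕ → ℕ → Bool` encodes infinitely many strings, where
`ω i j` is the `j`-th bit of the `i`-th string; the measure `ν` makes all bits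
i.i.d. with `P(bit = 1) = p`.  The trie on `n` strings uses strings `0,…,n-1`.
-/

open MeasureTheory ProbabilityTheory Real Filter

/-- The number of strings among the first `n` (encoded in `ω`) whose first `k` bits
form the word `r ∈ {0,1}^k`. -/
def prefCount (ω : ℕ → ℕ → Bool) (n k : ℕ) (r : Fin k → Bool) : ℕ :=
  ((Finset.range n).filter fun i => ∀ j : Fin k, ω i j = r j).card

/-- `X_k`: the number of words `r ∈ {0,1}^k` that are prefixes of at least two of the
first `n` strings. -/
def fillCount (ω : ℕ → ℕ → Bool) (n k : ℕ) : ℕ :=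
  (Finset.univ.filter fun r : Fin k → Bool => 2 ≤ prefCount ω n k r).card

/-- `X̄_k = X_k / 2^k`, the proportion of filled words at level `k`. -/
noncomputable def fracFilled (ω : ℕ → ℕ → Bool) (n k : ℕ) : ℝ :=
  (fillCount ω n k : ℝ) / 2 ^ k

/-- The α-fillup level `F_n(α) = max {k : X̄_k ≥ α}`. -/
noncomputable def fillupLevel (α : ℝ) (ω : ℕ → ℕ → Bool) (n : ℕ) : ℕ :=
  sSup {k | α ≤ fracFilled ω n k}

/-- `ν` is a probability measure on `ℕ → ℕ → Bool` under which all the bits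
`ω i j` are i.i.d. with `P(bit = 1) = p` (characterized by cylinder probabilities). -/
def IIDBits (p : ℝ) (ν : Measure (ℕ → ℕ → Bool)) : Prop :=
  IsProbabilityMeasure ν ∧
    ∀ (S : Finset (ℕ × ℕ)) (b : ℕ × ℕ → Bool),
      ν {ω | ∀ s ∈ S, ω s.1 s.2 = b s} =
        ∏ s ∈ S, ENNReal.ofReal (if b s then p else 1 - p)

/-!
Write `L = ln (1/√(pq))` and `D = (ln p - ln q)/2`. For a uniformly random word `r` of length `k`,
`ln P(r)` is a sum of `k` independent terms `-L ± D`, so by Chebyshev's inequality it lies within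
`T` of `-kL` for all but a fraction `kD²/T²` of the words. A word is filled with probability at most
`n P(r)`, and is unfilled with probability at most `4/(n P(r))` by the second moment method. Hence
`E X̄_k` is close to `0` when `kL` exceeds `ln n` by a large multiple of `√(ln n)`, and close to `1`
when it falls short of `ln n` by as much. Since `X̄_k` decreases in `k`, Markov's inequality at the
two levels `ln n / L ± A √(ln n)` confines `F_n(α)` between them.
-/

open scoped BigOperators Topology

section Averages

variable {β : Type*} [Fintype β]

lemma expect_fin_succ_pi {M : Type*} [AddCommMonoid M] [Module ℚ≥0 M] {k : ℕ}
    (F : (Fin (k + 1) → β) → M) :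
    𝔼 r, F r = 𝔼 b, 𝔼 r : Fin k → β, F (Fin.cons b r) := by
  rw [← Fintype.expect_equiv (Fin.consEquiv fun _ : Fin (k + 1) => β) _ F fun _ => rfl,
    ← Finset.univ_product_univ, Finset.expect_product]
  rfl

variable [Nonempty β]

lemma expect_le_expect_sq_div_add {g h : β → ℝ} {T δ : ℝ} (hT : 0 < T) (hδ : 0 ≤ δ)
    (hg : ∀ x, g x ≤ 1) (hgh : ∀ x, |h x| ≤ T → g x ≤ δ) :
    𝔼 x, g x ≤ (𝔼 x, h x ^ 2) / T ^ 2 + δ := by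
  have pointwise (x : β) : g x ≤ h x ^ 2 / T ^ 2 + δ := by
    rcases le_or_gt |h x| T with hx | hx
    · exact (hgh x hx).trans (le_add_of_nonneg_left (by positivity))
    · have : 1 ≤ h x ^ 2 / T ^ 2 := by
        rw [one_le_div (by positivity), ← sq_abs (h x)]
        gcongr
      linarith [hg x]
  calc 𝔼 x, g x ≤ 𝔼 x, (h x ^ 2 / T ^ 2 + δ) := Finset.expect_le_expect fun x _ => pointwise x
    _ = (𝔼 x, h x ^ 2) / T ^ 2 + δ := by
      rw [Finset.expect_add_distrib, Fintype.expect_const, Finset.expect_div]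

variable {K : Type*} [Field K] [CharZero K] {f : β → K}

lemma expect_sum_comp_eq_zero (hf : 𝔼 b, f b = 0) (k : ℕ) :
    𝔼 r : Fin k → β, ∑ j, f (r j) = 0 := by
  induction k with
  | zero => simp
  | succ k ih =>
    simp only [expect_fin_succ_pi, Fin.sum_univ_succ, Fin.cons_zero, Fin.cons_succ,
      Finset.expect_add_distrib, Fintype.expect_const, ih, hf, add_zero]

lemma expect_sq_sum_comp (hf : 𝔼 b, f b = 0) (k : ℕ) :
    𝔼 r : Fin k → β, (∑ j, f (r j)) ^ 2 = k * 𝔼 b, f b ^ 2 := by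
  induction k with
  | zero => simp
  | succ k ih =>
    simp only [expect_fin_succ_pi, Fin.sum_univ_succ, Fin.cons_zero, Fin.cons_succ, add_sq,
      Finset.expect_add_distrib, Fintype.expect_const, ih, ← Finset.mul_expect,
      expect_sum_comp_eq_zero hf, mul_zero, add_zero]
    push_cast
    ring

end Averages

section Probability

variable {Ω : Type*} [MeasurableSpace Ω] {μ : Measure Ω}

/-- `Y = O_p(b)` along `l`: the ratio of `Y` to the deterministic scale `b` is bounded in
probability. -/
def IsBigOInProbability {ι : Type*} (μ : Measure Ω) (l : Filter ι) (Y : ι → Ω → ℝ) (b : ι → ℝ) :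
    Prop :=
  ∀ ε > (0 : ℝ), ∃ A > (0 : ℝ), ∀ᶠ i in l, μ {ω | A * b i < |Y i ω|} < ENNReal.ofReal ε

lemma IsBigOInProbability.tendsto_div_sub_one {ι : Type*} {l : Filter ι} {Y : ι → Ω → ℝ}
    {a b : ι → ℝ} (hY : IsBigOInProbability μ l (fun i ω => Y i ω - a i) b) (hba : b =o[l] a)
    (ha : ∀ᶠ i in l, a i ≠ 0) {ε : ℝ} (hε : 0 < ε) :
    Tendsto (fun i => μ {ω | ε < |Y i ω / a i - 1|}) l (𝓝 0) := by
  refine ENNReal.tendsto_nhds_zero.2 fun δ hδ => ?_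
  obtain ⟨η, -, hη0, hηδ⟩ := ENNReal.lt_iff_exists_real_btwn.1 hδ
  obtain ⟨A, hA, hYA⟩ := hY η (ENNReal.ofReal_pos.1 hη0)
  filter_upwards [hYA, ha, hba.def (div_pos hε hA)] with i hYi hai hbi
  refine (measure_mono fun ω (hω : ε < |Y i ω / a i - 1|) => ?_).trans (hYi.le.trans hηδ.le)
  calc A * b i ≤ A * (ε / A * |a i|) := by gcongr; exact (le_abs_self _).trans hbi
    _ = ε * |a i| := by field_simp
    _ < |Y i ω / a i - 1| * |a i| := by gcongr
    _ = |Y i ω - a i| := by rw [← abs_mul, sub_mul, div_mul_cancel₀ _ hai, one_mul]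

variable [IsProbabilityMeasure μ]

lemma mul_measureReal_lt_le_one_sub_integral {X : Ω → ℝ} (hX : Integrable X μ)
    (hX1 : ∀ᵐ ω ∂μ, X ω ≤ 1) {c : ℝ} (hc : c ≤ 1) :
    (1 - c) * μ.real {ω | X ω < c} ≤ 1 - ∫ ω, X ω ∂μ := by
  have markov := mul_meas_ge_le_integral_of_nonneg
    (hX1.mono fun ω hω => sub_nonneg.2 hω) ((integrable_const 1).sub hX) (1 - c)
  rw [integral_sub (integrable_const 1) hX, integral_const, probReal_univ, one_smul] at markov
  refine (mul_le_mul_of_nonneg_left (measureReal_mono ?_) (sub_nonneg.2 hc)).trans markov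
  exact fun ω (hω : X ω < c) => sub_le_sub_left hω.le 1

lemma variance_sum_le_sum_integral {ι : Type*} {s : Finset ι} {X : ι → Ω → ℝ}
    (hXm : ∀ i ∈ s, AEMeasurable (X i) μ) (hX : ∀ i ∈ s, ∀ᵐ ω ∂μ, X i ω ∈ Set.Icc 0 1)
    (hind : Set.Pairwise s fun i j => X i ⟂ᵢ[μ] X j) :
    Var[∑ i ∈ s, X i; μ] ≤ ∑ i ∈ s, μ[X i] := by
  rw [IndepFun.variance_sum (fun i hi => memLp_of_bounded (hX i hi)
    (hXm i hi).aestronglyMeasurable 2) hind]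
  refine Finset.sum_le_sum fun i hi => (variance_le_sub_mul_sub (hX i hi) (hXm i hi)).trans ?_
  nlinarith [sq_nonneg μ[X i]]

lemma measureReal_sum_le_half_mul_le {ι : Type*} {s : Finset ι} {X : ι → Ω → ℝ}
    (hXm : ∀ i ∈ s, AEMeasurable (X i) μ) (hX : ∀ i ∈ s, ∀ᵐ ω ∂μ, X i ω ∈ Set.Icc 0 1)
    (hind : Set.Pairwise s fun i j => X i ⟂ᵢ[μ] X j) :
    μ.real {ω | ∑ i ∈ s, X i ω ≤ (∑ i ∈ s, μ[X i]) / 2} * ∑ i ∈ s, μ[X i] ≤ 4 := by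
  have hL2 (i) (hi : i ∈ s) : MemLp (X i) 2 μ :=
    memLp_of_bounded (hX i hi) (hXm i hi).aestronglyMeasurable 2
  have mean : μ[∑ i ∈ s, X i] = ∑ i ∈ s, μ[X i] := by
    simp only [Finset.sum_apply]
    exact integral_finsetSum _ fun i hi => (hL2 i hi).integrable one_le_two
  set m := ∑ i ∈ s, μ[X i]
  rcases le_or_gt m 0 with hm | hm
  · exact (mul_nonpos_of_nonneg_of_nonpos measureReal_nonneg hm).trans (by norm_num)
  have chebyshev := meas_ge_le_variance_div_sq (memLp_finsetSum' s hL2) (half_pos hm)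
  rw [mean] at chebyshev
  have near_mean : {ω | ∑ i ∈ s, X i ω ≤ m / 2} ⊆ {ω | m / 2 ≤ |(∑ i ∈ s, X i) ω - m|} := by
    intro ω (hω : ∑ i ∈ s, X i ω ≤ m / 2)
    change m / 2 ≤ |(∑ i ∈ s, X i) ω - m|
    refine le_abs.2 (Or.inr ?_)
    rw [Finset.sum_apply]
    linarith
  rw [← le_div_iff₀ hm]
  calc μ.real {ω | ∑ i ∈ s, X i ω ≤ m / 2}
      ≤ Var[∑ i ∈ s, X i; μ] / (m / 2) ^ 2 :=
        ENNReal.toReal_le_of_le_ofReal (div_nonneg (variance_nonneg _ _) (sq_nonneg _))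
          ((measure_mono near_mean).trans chebyshev)
    _ ≤ m / (m / 2) ^ 2 := by gcongr; exact variance_sum_le_sum_integral hXm hX hind
    _ = 4 / m := by field_simp; norm_num

end Probability

section WordProbabilities

/-- The probability of the letter `b` under a source emitting `true` with probability `p`. -/
def letterProb (p : ℝ) (b : Bool) : ℝ := if b then p else 1 - p

/-- The probability `P(r)` that a random string starts with the word `r`. -/
def wordProb (p : ℝ) {k : ℕ} (r : Fin k → Bool) : ℝ := ∏ j, letterProb p (r j)

/-- The rate `ln (1/√(pq))`: most words of length `k` have probability about
`exp (-k * typicalRate p)`. `Real.logb (1/√(pq)) x` unfolds to `Real.log x / typicalRate p`. -/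
noncomputable def typicalRate (p : ℝ) : ℝ := Real.log (1 / √(p * (1 - p)))

/-- The standard deviation `(ln p - ln q)/2`, up to sign, of the log-probability of a uniformly
random letter. -/
noncomputable def logSpread (p : ℝ) : ℝ := (Real.log p - Real.log (1 - p)) / 2

variable {p : ℝ}

lemma letterProb_pos (hp : 0 < p) (hp1 : p < 1) (b : Bool) : 0 < letterProb p b := by
  cases b <;> simp [letterProb, hp, hp1]

lemma wordProb_pos (hp : 0 < p) (hp1 : p < 1) {k : ℕ} (r : Fin k → Bool) : 0 < wordProb p r :=
  Finset.prod_pos fun j _ => letterProb_pos hp hp1 (r j)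

lemma typicalRate_pos (hp : 0 < p) (hp1 : p < 1) : 0 < typicalRate p := by
  have : 0 < p * (1 - p) := mul_pos hp (sub_pos.2 hp1)
  refine Real.log_pos (one_lt_one_div (by positivity) ?_)
  rw [Real.sqrt_lt' one_pos]
  nlinarith

lemma typicalRate_eq (hp : 0 < p) (hp1 : p < 1) :
    typicalRate p = -((Real.log p + Real.log (1 - p)) / 2) := by
  have hq : 0 < 1 - p := sub_pos.2 hp1
  rw [typicalRate, one_div, Real.log_inv, Real.log_sqrt (by positivity),
    Real.log_mul hp.ne' hq.ne']

lemma log_letterProb_add_typicalRate (hp : 0 < p) (hp1 : p < 1) (b : Bool) :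
    Real.log (letterProb p b) + typicalRate p = if b then logSpread p else -logSpread p := by
  rw [typicalRate_eq hp hp1]
  cases b <;> simp only [letterProb, logSpread, if_true, Bool.false_eq_true, if_false] <;> ring

lemma log_wordProb_add_mul_typicalRate (hp : 0 < p) (hp1 : p < 1) {k : ℕ} (r : Fin k → Bool) :
    Real.log (wordProb p r) + k * typicalRate p =
      ∑ j, if r j then logSpread p else -logSpread p := by
  rw [wordProb, Real.log_prod fun j _ => (letterProb_pos hp hp1 (r j)).ne']
  simp only [← log_letterProb_add_typicalRate hp hp1, Finset.sum_add_distrib, Finset.sum_const,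
    Finset.card_univ, Fintype.card_fin, nsmul_eq_mul]

lemma expect_sq_log_wordProb_add (hp : 0 < p) (hp1 : p < 1) (k : ℕ) :
    𝔼 r : Fin k → Bool, (Real.log (wordProb p r) + k * typicalRate p) ^ 2 =
      k * logSpread p ^ 2 := by
  simp only [log_wordProb_add_mul_typicalRate hp hp1]
  rw [expect_sq_sum_comp (f := fun b : Bool => if b then logSpread p else -logSpread p)]
  · simp
  · rw [Fintype.expect_eq_sum_div_card]
    simp

lemma expect_le_of_typical_words (hp : 0 < p) (hp1 : p < 1) {k : ℕ}
    {g : (Fin k → Bool) → ℝ} {T δ : ℝ} (hT : 0 < T) (hδ : 0 ≤ δ) (hg : ∀ r, g r ≤ 1)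
    (hgδ : ∀ r, |Real.log (wordProb p r) + k * typicalRate p| ≤ T → g r ≤ δ) :
    𝔼 r, g r ≤ k * logSpread p ^ 2 / T ^ 2 + δ := by
  rw [← expect_sq_log_wordProb_add hp hp1]
  exact expect_le_expect_sq_div_add hT hδ hg hgδ

end WordProbabilities

section FillupLevel

variable {ω : ℕ → ℕ → Bool} {n k : ℕ} {α : ℝ}

lemma prefCount_succ_le (r : Fin (k + 1) → Bool) :
    prefCount ω n (k + 1) r ≤ prefCount ω n k (Fin.init r) :=
  Finset.card_le_card <| Finset.monotone_filter_right _ fun _ _ h j => h j.castSucc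

lemma fillCount_succ_le (ω : ℕ → ℕ → Bool) (n k : ℕ) :
    fillCount ω n (k + 1) ≤ fillCount ω n k * 2 := by
  rw [fillCount, fillCount, ← Fintype.card_bool, ← Finset.card_univ, ← Finset.card_product]
  refine Finset.card_le_card_of_injOn (fun r => (Fin.init r, r (Fin.last k))) ?_ ?_
  · intro r hr
    have hr : 2 ≤ prefCount ω n (k + 1) r := by simpa using hr
    simpa using hr.trans (prefCount_succ_le r)
  · intro r _ r' _ h
    rw [← Fin.snoc_init_self r, ← Fin.snoc_init_self r', (Prod.mk.inj h).1, (Prod.mk.inj h).2]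

lemma antitone_fracFilled (ω : ℕ → ℕ → Bool) (n : ℕ) : Antitone (fracFilled ω n) := by
  refine antitone_nat_of_succ_le fun k => ?_
  rw [fracFilled, fracFilled, pow_succ, div_le_iff₀ (by positivity)]
  have : (fillCount ω n (k + 1) : ℝ) ≤ fillCount ω n k * 2 := by
    exact_mod_cast fillCount_succ_le ω n k
  refine this.trans_eq ?_
  field_simp

lemma fillCount_le (ω : ℕ → ℕ → Bool) (n k : ℕ) : fillCount ω n k ≤ n := by
  calc fillCount ω n k ≤ ((Finset.range n).image fun i (j : Fin k) => ω i j).card := by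
        refine Finset.card_le_card fun r hr => ?_
        have hr : 0 < prefCount ω n k r := two_pos.trans_le (Finset.mem_filter.1 hr).2
        obtain ⟨i, hi⟩ := Finset.card_pos.1 hr
        obtain ⟨hin, hir⟩ := Finset.mem_filter.1 hi
        exact Finset.mem_image.2 ⟨i, hin, funext hir⟩
    _ ≤ (Finset.range n).card := Finset.card_image_le
    _ = n := Finset.card_range n

lemma tendsto_fracFilled (ω : ℕ → ℕ → Bool) (n : ℕ) :
    Tendsto (fracFilled ω n) atTop (𝓝 0) := by
  have hbound : Tendsto (fun k : ℕ => (n : ℝ) / 2 ^ k) atTop (𝓝 0) :=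
    tendsto_const_nhds.div_atTop (tendsto_pow_atTop_atTop_of_one_lt one_lt_two)
  refine squeeze_zero (fun k => by unfold fracFilled; positivity) (fun k => ?_) hbound
  rw [fracFilled]
  gcongr
  exact fillCount_le ω n k

lemma bddAbove_setOf_le_fracFilled (hα : 0 < α) (ω : ℕ → ℕ → Bool) (n : ℕ) :
    BddAbove {k | α ≤ fracFilled ω n k} := by
  obtain ⟨m, hm⟩ := ((tendsto_fracFilled ω n).eventually_lt_const hα).exists
  exact ⟨m, fun k hk => le_of_not_ge fun hmk =>
    (hm.trans_le hk).not_ge (antitone_fracFilled ω n hmk)⟩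

-- `k = 0` is excluded because `sSup ∅ = 0` makes the fillup level `0` when no level qualifies.
lemma le_fillupLevel_iff (hα : 0 < α) (hk : k ≠ 0) :
    k ≤ fillupLevel α ω n ↔ α ≤ fracFilled ω n k := by
  have hbdd := bddAbove_setOf_le_fracFilled hα ω n
  refine ⟨fun hkF => ?_, fun h => le_csSup hbdd h⟩
  have hne : {k | α ≤ fracFilled ω n k}.Nonempty := by
    by_contra hempty
    rw [fillupLevel, Set.not_nonempty_iff_eq_empty.1 hempty, csSup_empty] at hkF
    exact hk (Nat.le_zero.1 hkF)
  exact (Nat.sSup_mem hne hbdd).trans (antitone_fracFilled ω n hkF)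

end FillupLevel

section FilledWords

variable {p : ℝ} {ν : Measure (ℕ → ℕ → Bool)} {k n : ℕ}

/-- The event that string `i` starts with the word `r`. -/
def prefixEvent (r : Fin k → Bool) (i : ℕ) : Set (ℕ → ℕ → Bool) := {ω | ∀ j : Fin k, ω i j = r j}

/-- The event that the word `r` is filled by the first `n` strings. -/
def filledEvent (n : ℕ) (r : Fin k → Bool) : Set (ℕ → ℕ → Bool) := {ω | 2 ≤ prefCount ω n k r}

lemma measurableSet_prefixEvent (r : Fin k → Bool) (i : ℕ) : MeasurableSet (prefixEvent r i) := by
  simp only [prefixEvent]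
  measurability

lemma prefCount_eq_sum_indicator (ω : ℕ → ℕ → Bool) (n : ℕ) (r : Fin k → Bool) :
    (prefCount ω n k r : ℝ) = ∑ i ∈ Finset.range n, (prefixEvent r i).indicator (fun _ => 1) ω := by
  classical
  simp only [prefCount, Finset.natCast_card_filter, Set.indicator_apply, prefixEvent,
    Set.mem_ofPred_eq]

lemma measurableSet_filledEvent (n : ℕ) (r : Fin k → Bool) : MeasurableSet (filledEvent n r) := by
  have hcount : Measurable fun ω => (prefCount ω n k r : ℝ) := by
    simp only [prefCount_eq_sum_indicator]
    exact Finset.measurable_fun_sum _ fun i _ =>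
      measurable_const.indicator (measurableSet_prefixEvent r i)
  have : filledEvent n r = {ω | (2 : ℝ) ≤ prefCount ω n k r} := by
    simp only [filledEvent, Nat.ofNat_le_cast]
  exact this ▸ measurableSet_le measurable_const hcount

lemma fracFilled_eq_expect (ω : ℕ → ℕ → Bool) (n k : ℕ) :
    fracFilled ω n k = 𝔼 r : Fin k → Bool, (filledEvent n r).indicator (fun _ => 1) ω := by
  classical
  simp [fracFilled, fillCount, Fintype.expect_eq_sum_div_card, Set.indicator_apply, filledEvent]

lemma fracFilled_mem_Icc (ω : ℕ → ℕ → Bool) (n k : ℕ) : fracFilled ω n k ∈ Set.Icc 0 1 := by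
  have hcard : fillCount ω n k ≤ 2 ^ k := by
    simpa [fillCount] using
      Finset.card_filter_le Finset.univ fun r : Fin k → Bool => 2 ≤ prefCount ω n k r
  refine ⟨by unfold fracFilled; positivity, div_le_one_of_le₀ ?_ (by positivity)⟩
  exact_mod_cast hcard

lemma integrable_fracFilled [IsFiniteMeasure ν] (n k : ℕ) :
    Integrable (fun ω => fracFilled ω n k) ν := by
  simp only [fracFilled_eq_expect, Fintype.expect_eq_sum_div_card]
  exact (integrable_finsetSum _ fun r _ =>
    (integrable_const 1).indicator (measurableSet_filledEvent n r)).div_const _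

lemma integral_fracFilled [IsFiniteMeasure ν] (n k : ℕ) :
    ∫ ω, fracFilled ω n k ∂ν = 𝔼 r : Fin k → Bool, ν.real (filledEvent n r) := by
  simp only [fracFilled_eq_expect, Fintype.expect_eq_sum_div_card]
  rw [integral_div, integral_finsetSum _ fun r _ =>
    (integrable_const 1).indicator (measurableSet_filledEvent n r)]
  congr! 2 with r
  exact integral_indicator_one (measurableSet_filledEvent n r)

namespace IIDBits

lemma measure_biInter_prefixEvent (hν : IIDBits p ν) (r : Fin k → Bool) (I : Finset ℕ) :
    ν (⋂ i ∈ I, prefixEvent r i) = (∏ j, ENNReal.ofReal (letterProb p (r j))) ^ I.card := by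
  have cylinder := hν.2 (I ×ˢ Finset.range k) fun s => if h : s.2 < k then r ⟨s.2, h⟩ else false
  have : (⋂ i ∈ I, prefixEvent r i) = {ω : ℕ → ℕ → Bool | ∀ s ∈ I ×ˢ Finset.range k,
      ω s.1 s.2 = if h : s.2 < k then r ⟨s.2, h⟩ else false} := by
    ext ω
    simp only [Set.mem_iInter, prefixEvent, Set.mem_ofPred_eq, Finset.mem_product,
      Finset.mem_range, Prod.forall]
    exact ⟨fun h i j hij => by simpa [hij.2] using h i hij.1 ⟨j, hij.2⟩,
      fun h i hi j => by simpa using h i j ⟨hi, j.2⟩⟩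
  rw [this, cylinder, Finset.prod_product]
  simp only [Finset.prod_const, Finset.prod_range, Fin.is_lt, dite_true, Fin.eta, letterProb]

lemma measure_prefixEvent (hν : IIDBits p ν) (r : Fin k → Bool) (i : ℕ) :
    ν (prefixEvent r i) = ∏ j, ENNReal.ofReal (letterProb p (r j)) := by
  simpa using hν.measure_biInter_prefixEvent r {i}

lemma measureReal_prefixEvent (hp : 0 < p) (hp1 : p < 1) (hν : IIDBits p ν) (r : Fin k → Bool)
    (i : ℕ) : ν.real (prefixEvent r i) = wordProb p r := by
  rw [measureReal_def, hν.measure_prefixEvent, ENNReal.toReal_prod, wordProb]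
  exact Finset.prod_congr rfl fun j _ => ENNReal.toReal_ofReal (letterProb_pos hp hp1 (r j)).le

lemma iIndepSet_prefixEvent (hν : IIDBits p ν) (r : Fin k → Bool) :
    iIndepSet (prefixEvent r) ν := by
  refine (iIndepSet_iff_meas_biInter (measurableSet_prefixEvent r)).2 fun I => ?_
  simp only [hν.measure_biInter_prefixEvent, hν.measure_prefixEvent, Finset.prod_const]

lemma measureReal_filledEvent_le (hp : 0 < p) (hp1 : p < 1) (hν : IIDBits p ν) (n : ℕ)
    (r : Fin k → Bool) : ν.real (filledEvent n r) ≤ n * wordProb p r := by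
  have := hν.1
  have hsub : filledEvent n r ⊆ ⋃ i ∈ Finset.range n, prefixEvent r i := by
    intro ω (hω : 2 ≤ prefCount ω n k r)
    obtain ⟨i, hi⟩ := Finset.card_pos.1 (two_pos.trans_le hω)
    exact Set.mem_biUnion (Finset.mem_filter.1 hi).1 (Finset.mem_filter.1 hi).2
  calc ν.real (filledEvent n r) ≤ ∑ i ∈ Finset.range n, ν.real (prefixEvent r i) :=
        (measureReal_mono hsub (measure_ne_top _ _)).trans (measureReal_biUnion_finset_le _ _)
    _ = n * wordProb p r := by simp [hν.measureReal_prefixEvent hp hp1]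

lemma measureReal_compl_filledEvent_mul_le (hp : 0 < p) (hp1 : p < 1) (hν : IIDBits p ν) (n : ℕ)
    (r : Fin k → Bool) : ν.real (filledEvent n r)ᶜ * (n * wordProb p r) ≤ 4 := by
  have := hν.1
  rcases lt_or_ge (n * wordProb p r) 2 with hsmall | hlarge
  · have : 0 < wordProb p r := wordProb_pos hp hp1 r
    calc ν.real (filledEvent n r)ᶜ * (n * wordProb p r) ≤ 1 * 2 := by
          gcongr
          exact measureReal_le_one
      _ ≤ 4 := by norm_num
  have second_moment := measureReal_sum_le_half_mul_le (μ := ν) (s := Finset.range n)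
    (X := fun i => (prefixEvent r i).indicator fun _ => 1)
    (fun i _ => (measurable_const.indicator (measurableSet_prefixEvent r i)).aemeasurable)
    (fun i _ => ae_of_all _ fun ω => by by_cases h : ω ∈ prefixEvent r i <;> simp [h])
    (fun i _ j _ hij => (hν.iIndepSet_prefixEvent r).iIndepFun_indicator.indepFun hij)
  have mean : ∑ i ∈ Finset.range n, ν[(prefixEvent r i).indicator fun _ => (1 : ℝ)] =
      n * wordProb p r := by
    simp [integral_indicator_const, measurableSet_prefixEvent, hν.measureReal_prefixEvent hp hp1]
  simp only [mean, ← prefCount_eq_sum_indicator] at second_moment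
  refine le_trans (mul_le_mul_of_nonneg_right (measureReal_mono ?_) (by linarith)) second_moment
  intro ω (hω : ¬2 ≤ prefCount ω n k r)
  have : (prefCount ω n k r : ℝ) ≤ 1 := by exact_mod_cast Nat.lt_succ_iff.1 (not_le.1 hω)
  exact this.trans (by linarith)

lemma integral_fracFilled_le (hp : 0 < p) (hp1 : p < 1) (hν : IIDBits p ν) (n k : ℕ) {T : ℝ}
    (hT : 0 < T) : ∫ ω, fracFilled ω n k ∂ν ≤
      k * logSpread p ^ 2 / T ^ 2 + n * Real.exp (T - k * typicalRate p) := by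
  have := hν.1
  rw [integral_fracFilled]
  refine expect_le_of_typical_words hp hp1 hT (by positivity) (fun r => measureReal_le_one)
    fun r hr => ?_
  refine (hν.measureReal_filledEvent_le hp hp1 n r).trans ?_
  gcongr
  rw [← Real.log_le_iff_le_exp (wordProb_pos hp hp1 r)]
  linarith [(abs_le.1 hr).2]

lemma one_sub_integral_fracFilled_le (hp : 0 < p) (hp1 : p < 1) (hν : IIDBits p ν) (hn : n ≠ 0)
    (k : ℕ) {T : ℝ} (hT : 0 < T) : 1 - ∫ ω, fracFilled ω n k ∂ν ≤
      k * logSpread p ^ 2 / T ^ 2 + 4 / n * Real.exp (T + k * typicalRate p) := by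
  have := hν.1
  have hcompl : 1 - ∫ ω, fracFilled ω n k ∂ν =
      𝔼 r : Fin k → Bool, ν.real (filledEvent n r)ᶜ := by
    simp only [probReal_compl_eq_one_sub (measurableSet_filledEvent n _),
      Finset.expect_sub_distrib, Fintype.expect_const, integral_fracFilled]
  rw [hcompl]
  refine expect_le_of_typical_words hp hp1 hT (by positivity) (fun r => measureReal_le_one)
    fun r hr => ?_
  have hw := wordProb_pos hp hp1 r
  have hwordProb : Real.exp (-(T + k * typicalRate p)) ≤ wordProb p r := by
    rw [← Real.le_log_iff_exp_le hw]
    linarith [(abs_le.1 hr).1]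
  have : (0 : ℝ) < n := Nat.cast_pos.2 (Nat.pos_of_ne_zero hn)
  calc ν.real (filledEvent n r)ᶜ ≤ 4 / (n * wordProb p r) :=
        (le_div_iff₀ (by positivity)).2 (hν.measureReal_compl_filledEvent_mul_le hp hp1 n r)
    _ ≤ 4 / (n * Real.exp (-(T + k * typicalRate p))) := by gcongr
    _ = 4 / n * Real.exp (T + k * typicalRate p) := by rw [Real.exp_neg]; field_simp

end IIDBits

end FilledWords

section Deviation

variable {p α x h : ℝ} {ν : Measure (ℕ → ℕ → Bool)} {n : ℕ}

lemma mul_sq_div_half_sq_le {y : ℝ} (hyx : y ≤ 2 * x) (D T : ℝ) :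
    y * D ^ 2 / (T / 2) ^ 2 ≤ 8 * x * D ^ 2 / T ^ 2 := by
  calc y * D ^ 2 / (T / 2) ^ 2 ≤ 2 * x * D ^ 2 / (T / 2) ^ 2 := by gcongr
    _ = 8 * x * D ^ 2 / T ^ 2 := by ring

namespace IIDBits

lemma mul_measureReal_add_lt_fillupLevel_le (hp : 0 < p) (hp1 : p < 1) (hα : 0 < α)
    (hν : IIDBits p ν) (hn : n ≠ 0) (hx : x = Real.log n / typicalRate p) (hh : 0 < h)
    (hhx : h + 1 ≤ x) : α * ν.real {ω | x + h < fillupLevel α ω n} ≤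
      8 * x * logSpread p ^ 2 / (h * typicalRate p) ^ 2 + Real.exp (-(h * typicalRate p / 2)) := by
  have := hν.1
  have hL := typicalRate_pos hp hp1
  set k := ⌈x + h⌉₊
  have hk : x + h ≤ k := Nat.le_ceil _
  have hk' : (k : ℝ) ≤ 2 * x := by linarith [Nat.ceil_lt_add_one (a := x + h) (by linarith)]
  have hk0 : k ≠ 0 := (Nat.ceil_pos.2 (by linarith)).ne'
  have level_to_frac : {ω | x + h < fillupLevel α ω n} ⊆ {ω | α ≤ fracFilled ω n k} :=
    fun ω hω => (le_fillupLevel_iff hα hk0).1 (Nat.ceil_le.2 (le_of_lt hω))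
  have hexp : n * Real.exp (h * typicalRate p / 2 - k * typicalRate p) ≤
      Real.exp (-(h * typicalRate p / 2)) := by
    have hlog : x * typicalRate p = Real.log n := by rw [hx, div_mul_cancel₀ _ hL.ne']
    rw [← Real.exp_log (Nat.cast_pos.2 (Nat.pos_of_ne_zero hn)), ← Real.exp_add, ← hlog]
    gcongr
    linarith [mul_le_mul_of_nonneg_right hk hL.le]
  calc α * ν.real {ω | x + h < fillupLevel α ω n}
      ≤ α * ν.real {ω | α ≤ fracFilled ω n k} :=
        mul_le_mul_of_nonneg_left (measureReal_mono level_to_frac) hα.le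
    _ ≤ ∫ ω, fracFilled ω n k ∂ν := mul_meas_ge_le_integral_of_nonneg
        (ae_of_all _ fun ω => (fracFilled_mem_Icc ω n k).1) (integrable_fracFilled n k) α
    _ ≤ _ := (hν.integral_fracFilled_le hp hp1 n k (by positivity)).trans
        (add_le_add (mul_sq_div_half_sq_le hk' _ _) hexp)

lemma mul_measureReal_fillupLevel_lt_sub_le (hp : 0 < p) (hp1 : p < 1) (hα : 0 < α) (hα1 : α ≤ 1)
    (hν : IIDBits p ν) (hn : n ≠ 0) (hx : x = Real.log n / typicalRate p) (hh : 0 < h)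
    (hhx : h + 1 ≤ x) : (1 - α) * ν.real {ω | fillupLevel α ω n < x - h} ≤
      8 * x * logSpread p ^ 2 / (h * typicalRate p) ^ 2 +
        4 * Real.exp (typicalRate p - h * typicalRate p / 2) := by
  have := hν.1
  have hL := typicalRate_pos hp hp1
  set k := ⌈x - h⌉₊
  have hk : (k : ℝ) ≤ x - h + 1 := (Nat.ceil_lt_add_one (by linarith)).le
  have hk' : (k : ℝ) ≤ 2 * x := by linarith
  have hk0 : k ≠ 0 := (Nat.ceil_pos.2 (by linarith)).ne'
  have level_to_frac : {ω | (fillupLevel α ω n : ℝ) < x - h} ⊆ {ω | fracFilled ω n k < α} :=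
    fun ω hω => not_le.1 fun hfrac =>
      (Nat.lt_ceil.2 hω).not_ge ((le_fillupLevel_iff hα hk0).2 hfrac)
  have hexp : 4 / n * Real.exp (h * typicalRate p / 2 + k * typicalRate p) ≤
      4 * Real.exp (typicalRate p - h * typicalRate p / 2) := by
    have hlog : x * typicalRate p = Real.log n := by rw [hx, div_mul_cancel₀ _ hL.ne']
    rw [← Real.exp_log (Nat.cast_pos.2 (Nat.pos_of_ne_zero hn)), div_mul_eq_mul_div, mul_div_assoc,
      ← Real.exp_sub, ← hlog]
    refine mul_le_mul_of_nonneg_left (Real.exp_le_exp.2 ?_) (by norm_num)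
    linarith [mul_le_mul_of_nonneg_right hk hL.le]
  have hα1' : 0 ≤ 1 - α := sub_nonneg.2 hα1
  calc (1 - α) * ν.real {ω | (fillupLevel α ω n : ℝ) < x - h}
      ≤ (1 - α) * ν.real {ω | fracFilled ω n k < α} :=
        mul_le_mul_of_nonneg_left (measureReal_mono level_to_frac) hα1'
    _ ≤ 1 - ∫ ω, fracFilled ω n k ∂ν := mul_measureReal_lt_le_one_sub_integral
        (integrable_fracFilled n k) (ae_of_all _ fun ω => (fracFilled_mem_Icc ω n k).2) hα1
    _ ≤ _ := (hν.one_sub_integral_fracFilled_le hp hp1 hn k (by positivity)).trans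
        (add_le_add (mul_sq_div_half_sq_le hk' _ _) hexp)

lemma measureReal_lt_abs_fillupLevel_sub_le (hp : 0 < p) (hp1 : p < 1) (hα : 0 < α) (hα1 : α < 1)
    (hν : IIDBits p ν) (hn : n ≠ 0) (hx : x = Real.log n / typicalRate p) (hh : 0 < h)
    (hhx : h + 1 ≤ x) : ν.real {ω | h < |(fillupLevel α ω n : ℝ) - x|} ≤
      (1 / α + 1 / (1 - α)) * (8 * x * logSpread p ^ 2 / (h * typicalRate p) ^ 2 +
        4 * Real.exp (typicalRate p - h * typicalRate p / 2)) := by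
  have := hν.1
  have hL := typicalRate_pos hp hp1
  have hα1' : 0 < 1 - α := sub_pos.2 hα1
  set B := 8 * x * logSpread p ^ 2 / (h * typicalRate p) ^ 2 +
    4 * Real.exp (typicalRate p - h * typicalRate p / 2)
  have upper : ν.real {ω | x + h < fillupLevel α ω n} ≤ B / α := by
    rw [le_div_iff₀' hα]
    refine (hν.mul_measureReal_add_lt_fillupLevel_le hp hp1 hα hn hx hh hhx).trans
      (add_le_add le_rfl ?_)
    have : Real.exp (-(h * typicalRate p / 2)) ≤
      Real.exp (typicalRate p - h * typicalRate p / 2) := by gcongr; linarith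
    linarith [Real.exp_pos (typicalRate p - h * typicalRate p / 2)]
  have lower : ν.real {ω | (fillupLevel α ω n : ℝ) < x - h} ≤ B / (1 - α) := by
    rw [le_div_iff₀' hα1']
    exact hν.mul_measureReal_fillupLevel_lt_sub_le hp hp1 hα hα1.le hn hx hh hhx
  have two_tails : {ω | h < |(fillupLevel α ω n : ℝ) - x|} ⊆
      {ω | x + h < fillupLevel α ω n} ∪ {ω | (fillupLevel α ω n : ℝ) < x - h} := by
    intro ω (hω : h < |(fillupLevel α ω n : ℝ) - x|)
    exact (lt_abs.1 hω).imp (fun hω => show x + h < fillupLevel α ω n by linarith)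
      fun hω => show (fillupLevel α ω n : ℝ) < x - h by linarith
  calc ν.real {ω | h < |(fillupLevel α ω n : ℝ) - x|} ≤ B / α + B / (1 - α) :=
        (measureReal_mono two_tails).trans <|
          (measureReal_union_le _ _).trans (add_le_add upper lower)
    _ = (1 / α + 1 / (1 - α)) * B := by ring

end IIDBits

end Deviation

section Asymptotics

lemma tendsto_sqrt_log_natCast_atTop : Tendsto (fun n : ℕ => √(Real.log n)) atTop atTop :=
  Real.tendsto_sqrt_atTop.comp (Real.tendsto_log_atTop.comp tendsto_natCast_atTop_atTop)

lemma sqrt_isLittleO_div {L : ℝ} (hL : L ≠ 0) : Real.sqrt =o[atTop] fun x => x / L := by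
  refine Asymptotics.isLittleO_of_tendsto'
    ((eventually_ne_atTop 0).mono fun x hx h => absurd h (div_ne_zero hx hL)) ?_
  refine ((tendsto_const_nhds (x := L)).div_atTop Real.tendsto_sqrt_atTop).congr fun x => ?_
  rw [div_div_eq_mul_div, mul_comm, mul_div_assoc, Real.sqrt_div_self', mul_one_div]

lemma tendsto_deviationBound {L : ℝ} (hL : 0 < L) (C D : ℝ) :
    Tendsto (fun A : ℝ => C * (8 * D ^ 2 / (A ^ 2 * L ^ 3) + 4 * Real.exp (L - A * L / 2)))
      atTop (𝓝 0) := by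
  have hpow : Tendsto (fun A : ℝ => 8 * D ^ 2 / (A ^ 2 * L ^ 3)) atTop (𝓝 0) :=
    tendsto_const_nhds.div_atTop <|
      (tendsto_pow_atTop two_ne_zero).atTop_mul_const (pow_pos hL 3)
  have hexponent : Tendsto (fun A : ℝ => L - A * L / 2) atTop atBot :=
    tendsto_atBot_add_const_left _ L <| tendsto_neg_atTop_atBot.comp <|
      (tendsto_id.atTop_mul_const hL).atTop_div_const two_pos
  simpa using (hpow.add ((Real.tendsto_exp_atBot.comp hexponent).const_mul 4)).const_mul C

lemma IIDBits.isBigOInProbability_fillupLevel_sub {p α : ℝ} {ν : Measure (ℕ → ℕ → Bool)}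
    (hp : 0 < p) (hp1 : p < 1) (hα : 0 < α) (hα1 : α < 1) (hν : IIDBits p ν) :
    IsBigOInProbability ν atTop (fun n ω => (fillupLevel α ω n : ℝ) - Real.log n / typicalRate p)
      fun n => √(Real.log n) := by
  have := hν.1
  have hL := typicalRate_pos hp hp1
  intro ε hε
  obtain ⟨A, hAε, hA⟩ := (((tendsto_deviationBound hL (1 / α + 1 / (1 - α))
    (logSpread p)).eventually_lt_const hε).and (eventually_gt_atTop 0)).exists
  have small_window : ∀ᶠ s : ℝ in atTop, A * s + 1 ≤ s ^ 2 / typicalRate p := by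
    filter_upwards [eventually_ge_atTop 1, eventually_ge_atTop ((A + 1) * typicalRate p)]
      with s hs1 hs
    rw [le_div_iff₀ hL]
    nlinarith
  refine ⟨A, hA, ?_⟩
  filter_upwards [eventually_ne_atTop 0,
    tendsto_sqrt_log_natCast_atTop.eventually_ge_atTop 1,
    tendsto_sqrt_log_natCast_atTop.eventually small_window] with n hn hs1 hwindow
  have hlog : √(Real.log n) ^ 2 = Real.log n := Real.sq_sqrt (Real.log_natCast_nonneg n)
  set s := √(Real.log n)
  rw [← ofReal_measureReal, ENNReal.ofReal_lt_ofReal_iff hε]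
  refine lt_of_le_of_lt ?_ hAε
  rw [← hlog]
  refine (hν.measureReal_lt_abs_fillupLevel_sub_le hp hp1 hα hα1 hn (by rw [hlog])
    (by positivity) hwindow).trans ?_
  have : 0 < 1 - α := sub_pos.2 hα1
  have : s ≠ 0 := by positivity
  gcongr ?_ * (?_ + 4 * Real.exp (_ - ?_ * _ / 2))
  · exact le_of_eq (by field_simp)
  · exact le_mul_of_one_le_right hA.le hs1

end Asymptotics

/-- Corollary of Theorem 1: `F_n(α) = log_{1/√(pq)} n + O_p(√(ln n))`; in particular
`F_n(α) / log_{1/√(pq)} n → 1` in probability. -/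
theorem fillupLevel_first_order
    (p q α : ℝ) (hp : 0 < p) (hp1 : p < 1) (hq : q = 1 - p) (hα : 0 < α) (hα1 : α < 1)
    (ν : Measure (ℕ → ℕ → Bool)) (hν : IIDBits p ν) :
    (∀ ε > (0 : ℝ), ∃ A > (0 : ℝ), ∀ᶠ n : ℕ in atTop,
      ν {ω | A * Real.sqrt (Real.log n) <
          |(fillupLevel α ω n : ℝ) - Real.logb (1 / Real.sqrt (p * q)) n|}
        < ENNReal.ofReal ε) ∧
    (∀ ε > (0 : ℝ),
      Tendsto
        (fun n : ℕ =>
          ν {ω | ε < |(fillupLevel α ω n : ℝ) / Real.logb (1 / Real.sqrt (p * q)) n - 1|})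
        atTop (nhds 0)) := by
  subst hq
  have hO := hν.isBigOInProbability_fillupLevel_sub hp hp1 hα hα1
  have hlog : Tendsto (fun n : ℕ => Real.log n) atTop atTop :=
    Real.tendsto_log_atTop.comp tendsto_natCast_atTop_atTop
  have hL : typicalRate p ≠ 0 := (typicalRate_pos hp hp1).ne'
  exact ⟨hO, fun ε hε => hO.tendsto_div_sub_one ((sqrt_isLittleO_div hL).comp_tendsto hlog)
    ((hlog.eventually_ne_atTop 0).mono fun n hn => div_ne_zero hn hL) hε⟩
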